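/- arXiv:1209.1761 — 3 statements merged into one kernel-verified Lean document; each statement's English description precedes it below -/
import Mathlib

section
/- For a random walk started at a ∈ A, the Green's function of A ∪ B satisfies the decomposition G_{A∪B}(a,a') = G_A(a,a') + Σ_{b ∈ B} H_{B∪C}(a,b) · G_{A∪B}(b,a') for every a' ∈ A, where the sum is over the hitting distribution of B∪C restricted to B. -/
open MeasureTheory ENNReal

/-- The first hitting time of the set `D` along the path `s`, valued in `ℕ∞`
(`⊤` if the path never visits `D`). -/
noncomputable def hitTime {Ω : Type*} (D : Set Ω) (s : ℕ → Ω) : ℕ∞ :=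
  ⨅ (k : ℕ) (_ : s k ∈ D), (k : ℕ∞)

/-- The path of the walk started at `x` with steps `ξ` : `S_n = x + ∑_{j<n} ξ j`. -/
def walk {Ω : Type*} [AddCommGroup Ω] (x : Ω) (ξ : ℕ → Ω) (n : ℕ) : Ω :=
  x + ∑ j ∈ Finset.range n, ξ j

/-- A random walk on a group `Ω`, described by the common law `ν` of its i.i.d.
steps together with the joint law `μ` of the step sequence (characterized on
cylinder sets as the product of `ν`'s). -/
structure RandomWalk (Ω : Type*) [AddCommGroup Ω] [MeasurableSpace Ω] where
  ν : Measure Ω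
  probν : IsProbabilityMeasure ν
  μ : Measure (ℕ → Ω)
  probμ : IsProbabilityMeasure μ
  iid : ∀ (n : ℕ) (f : Fin n → Ω),
    μ {ξ | ∀ i : Fin n, ξ (i : ℕ) = f i} = ∏ i : Fin n, ν {f i}

variable {Ω : Type*} [AddCommGroup Ω] [MeasurableSpace Ω]

/-- `P^x(θ)` : the probability that the path `(S_n)` of the walk started at `x`
has the property `θ`. -/
noncomputable def RandomWalk.P (W : RandomWalk Ω) (x : Ω) (θ : Set (ℕ → Ω)) : ℝ≥0∞ :=
  W.μ {ξ | walk x ξ ∈ θ}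

/-- `E^x(T_D)` : the expected hitting time of `D` for the walk started at `x`. -/
noncomputable def RandomWalk.E (W : RandomWalk Ω) (x : Ω) (D : Set Ω) : ℝ≥0∞ :=
  ∫⁻ ξ, (hitTime D (walk x ξ) : ℝ≥0∞) ∂W.μ

/-- The truncated Green's function `G_D(x,y) = ∑_{j≥0} P^x(S_j = y, j < T_{Dᶜ})`. -/
noncomputable def RandomWalk.G (W : RandomWalk Ω) (D : Set Ω) (x y : Ω) : ℝ≥0∞ :=
  ∑' j : ℕ, W.P x {s | s j = y ∧ (j : ℕ∞) < hitTime Dᶜ s}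

/-- The hitting distribution `H_D(x,y) = P^x(S_{T_D} = y)`. -/
noncomputable def RandomWalk.H (W : RandomWalk Ω) (D : Set Ω) (x y : Ω) : ℝ≥0∞ :=
  W.P x {s | ∃ k : ℕ, hitTime D s = (k : ℕ∞) ∧ s k = y}

/-- `S` depends only on the first `k` coordinates. -/
def Dep {Ω : Type*} (k : ℕ) (S : Set (ℕ → Ω)) : Prop :=
  ∀ ξ ξ' : ℕ → Ω, (∀ i < k, ξ i = ξ' i) → ξ ∈ S → ξ' ∈ S

def resn {Ω : Type*} (k : ℕ) (ξ : ℕ → Ω) : Fin k → Ω := fun i => ξ i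

theorem Dep.eq_pre {Ω : Type*} {k : ℕ} {S : Set (ℕ → Ω)} (h : Dep k S) :
    S = resn k ⁻¹' (resn k '' S) := by
  refine Set.Subset.antisymm (Set.subset_preimage_image _ _) ?_
  rintro ξ ⟨ξ', h1, h2⟩
  exact h ξ' ξ (fun i hi => congrFun h2 ⟨i, hi⟩) h1

theorem measurable_resn {Ω : Type*} [MeasurableSpace Ω] (k : ℕ) :
    Measurable (resn (Ω := Ω) k) :=
  measurable_pi_lambda _ fun i => measurable_pi_apply _

theorem Dep.meas {Ω : Type*} [Countable Ω] [MeasurableSpace Ω]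
    [MeasurableSingletonClass Ω] {k : ℕ} {S : Set (ℕ → Ω)} (h : Dep k S) :
    MeasurableSet S := by
  rw [h.eq_pre]
  exact measurable_resn k (Set.to_countable _).measurableSet

theorem Dep.measure_eq {Ω : Type*} [AddCommGroup Ω] [Countable Ω] [MeasurableSpace Ω]
    [MeasurableSingletonClass Ω] (W : RandomWalk Ω) {k : ℕ} {S : Set (ℕ → Ω)} (h : Dep k S) :
    W.μ S = ∑' u : (resn k '' S : Set (Fin k → Ω)), ∏ i, W.ν {u.1 i} := by
  conv_lhs => rw [h.eq_pre, ← Set.biUnion_preimage_singleton]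
  rw [measure_biUnion (Set.to_countable _)]
  · refine tsum_congr fun u => ?_
    rw [← W.iid]
    congr 1
    ext ξ
    simp [resn, funext_iff]
  · intro u _ v _ huv
    exact Disjoint.preimage _ (by simpa using huv)
  · intro u _
    exact measurable_resn k (measurableSet_singleton u)

theorem markov {Ω : Type*} [AddCommGroup Ω] [Countable Ω] [MeasurableSpace Ω]
    [MeasurableSingletonClass Ω] (W : RandomWalk Ω) {k m : ℕ} {S T : Set (ℕ → Ω)}
    (hS : Dep k S) (hT : Dep m T) :
    W.μ {ξ | ξ ∈ S ∧ (fun i => ξ (k + i)) ∈ T} = W.μ S * W.μ T := by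
  have key : {ξ | ξ ∈ S ∧ (fun i => ξ (k + i)) ∈ T} =
      ⋃ p : (resn k '' S : Set (Fin k → Ω)) × (resn m '' T : Set (Fin m → Ω)),
        {ξ | ∀ i : Fin (k + m), ξ i = Fin.append p.1.1 p.2.1 i} := by
    ext ξ
    simp only [Set.mem_ofPred_eq, Set.mem_iUnion, Fin.forall_fin_add, Fin.append_left,
      Fin.append_right]
    constructor
    · rintro ⟨h1, h2⟩
      exact ⟨(⟨_, ξ, h1, rfl⟩, ⟨_, _, h2, rfl⟩), by simp [resn], by simp [resn]⟩
    · rintro ⟨⟨⟨u, ξ1, h1, rfl⟩, ⟨v, ξ2, h2, rfl⟩⟩, h3, h4⟩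
      refine ⟨hS ξ1 _ (fun i hi => ?_) h1, hT ξ2 _ (fun i hi => ?_) h2⟩
      · exact (h3 ⟨i, hi⟩).symm
      · exact (h4 ⟨i, hi⟩).symm
  rw [key, measure_iUnion]
  · simp_rw [W.iid, Fin.prod_univ_add, Fin.append_left, Fin.append_right]
    rw [ENNReal.tsum_prod (f := fun (u : (resn k '' S : Set (Fin k → Ω)))
      (v : (resn m '' T : Set (Fin m → Ω))) => (∏ i, W.ν {u.1 i}) * ∏ i, W.ν {v.1 i})]
    simp_rw [ENNReal.tsum_mul_left, ENNReal.tsum_mul_right]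
    rw [hS.measure_eq, hT.measure_eq]
  · intro p q hpq
    refine Set.disjoint_left.2 fun ξ h1 h2 => hpq ?_
    simp only [Set.mem_ofPred_eq, Fin.forall_fin_add, Fin.append_left, Fin.append_right] at h1 h2
    refine Prod.ext (Subtype.ext (funext fun i => ?_)) (Subtype.ext (funext fun i => ?_))
    · rw [← h1.1, h2.1]
    · rw [← h1.2, h2.2]
  · intro p
    refine Dep.meas (k := k + m) ?_
    intro ξ ξ' h h1 i
    rw [← h i i.2]
    exact h1 i

theorem lt_hit {Ω : Type*} (D : Set Ω) (s : ℕ → Ω) (j : ℕ) :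
    (j : ℕ∞) < hitTime Dᶜ s ↔ ∀ i ≤ j, s i ∈ D := by
  constructor
  · intro h i hi
    by_contra hc
    have : hitTime Dᶜ s ≤ i := iInf₂_le i hc
    exact absurd (h.trans_le this) (by simpa using hi)
  · intro h
    have : ((j + 1 : ℕ) : ℕ∞) ≤ hitTime Dᶜ s := by
      refine le_iInf₂ fun k hk => ?_
      rw [Nat.cast_le]
      by_contra hc
      exact hk (h k (by omega))
    exact lt_of_lt_of_le (by exact_mod_cast Nat.lt_succ_self j) this

theorem hit_eq {Ω : Type*} (D : Set Ω) (s : ℕ → Ω) (k : ℕ) :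
    hitTime D s = k ↔ s k ∈ D ∧ ∀ i < k, s i ∉ D := by
  constructor
  · intro h
    have h2 : ∀ i < k, s i ∉ D := by
      intro i hi hc
      have : hitTime D s ≤ i := iInf₂_le i hc
      rw [h, Nat.cast_le] at this
      omega
    refine ⟨?_, h2⟩
    by_contra hc
    have : ((k + 1 : ℕ) : ℕ∞) ≤ hitTime D s := by
      refine le_iInf₂ fun i hi => ?_
      rw [Nat.cast_le]
      by_contra hlt
      rcases Nat.lt_or_ge i k with h3 | h3
      · exact h2 i h3 hi
      · have : i = k := by omega
        exact hc (this ▸ hi)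
    rw [h, Nat.cast_le] at this
    omega
  · rintro ⟨h1, h2⟩
    refine le_antisymm (iInf₂_le k h1) (le_iInf₂ fun i hi => ?_)
    rw [Nat.cast_le]
    by_contra hc
    exact h2 i (by omega) hi

theorem walk_congr {Ω : Type*} [AddCommGroup Ω] (x : Ω) {ξ ξ' : ℕ → Ω} {k n : ℕ}
    (h : ∀ i < k, ξ i = ξ' i) (hn : n ≤ k) : walk x ξ n = walk x ξ' n := by
  unfold walk
  congr 1
  exact Finset.sum_congr rfl fun i hi => h i (by have := Finset.mem_range.1 hi; omega)

theorem walk_shift {Ω : Type*} [AddCommGroup Ω] (x : Ω) (ξ : ℕ → Ω) (k n : ℕ) :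
    walk (walk x ξ k) (fun i => ξ (k + i)) n = walk x ξ (k + n) := by
  unfold walk
  rw [Finset.sum_range_add, add_assoc]

theorem dep_walk {Ω : Type*} [AddCommGroup Ω] (x : Ω) (k : ℕ) (Q : (ℕ → Ω) → Prop)
    (hQ : ∀ s s', (∀ i ≤ k, s i = s' i) → Q s → Q s') : Dep k {ξ | Q (walk x ξ)} := by
  intro ξ ξ' h h1
  exact hQ _ _ (fun i hi => walk_congr x h hi) h1

/-- first entrance event into the complement of `A` at time `k`, position `b` -/
def hEv {Ω : Type*} [AddCommGroup Ω] (A : Set Ω) (a b : Ω) (k : ℕ) : Set (ℕ → Ω) :=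
  {ξ | (fun s : ℕ → Ω => (∀ i < k, s i ∈ A) ∧ s k = b) (walk a ξ)}

def gEv {Ω : Type*} [AddCommGroup Ω] (D : Set Ω) (x y : Ω) (m : ℕ) : Set (ℕ → Ω) :=
  {ξ | (fun s : ℕ → Ω => s m = y ∧ ∀ i ≤ m, s i ∈ D) (walk x ξ)}

theorem dep_hEv {Ω : Type*} [AddCommGroup Ω] (A : Set Ω) (a b : Ω) (k : ℕ) :
    Dep k (hEv A a b k) := by
  refine dep_walk a k (fun s : ℕ → Ω => (∀ i < k, s i ∈ A) ∧ s k = b) ?_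
  rintro s s' h ⟨h1, h2⟩
  exact ⟨fun i hi => h i hi.le ▸ h1 i hi, h k le_rfl ▸ h2⟩

theorem dep_gEv {Ω : Type*} [AddCommGroup Ω] (A : Set Ω) (a b : Ω) (k : ℕ) :
    Dep k (gEv A a b k) := by
  refine dep_walk a k (fun s : ℕ → Ω => s k = b ∧ ∀ i ≤ k, s i ∈ A) ?_
  rintro s s' h ⟨h1, h2⟩
  exact ⟨h k le_rfl ▸ h1, fun i hi => h i hi ▸ h2 i hi⟩

theorem G_eq {Ω : Type*} [AddCommGroup Ω] [MeasurableSpace Ω] (W : RandomWalk Ω)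
    (D : Set Ω) (x y : Ω) : W.G D x y = ∑' j, W.μ (gEv D x y j) := by
  unfold RandomWalk.G RandomWalk.P gEv
  simp only [lt_hit, Set.mem_ofPred_eq]

theorem H_eq {Ω : Type*} [AddCommGroup Ω] [Countable Ω] [MeasurableSpace Ω]
    [MeasurableSingletonClass Ω] (W : RandomWalk Ω)
    (A : Set Ω) (a b : Ω) (hb : b ∉ A) : W.H Aᶜ a b = ∑' k, W.μ (hEv A a b k) := by
  unfold RandomWalk.H RandomWalk.P
  rw [← measure_iUnion]
  · congr 1
    ext ξ
    simp only [hit_eq, Set.mem_ofPred_eq, Set.mem_iUnion, hEv, Set.mem_compl_iff, not_not]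
    refine exists_congr fun k => ?_
    constructor
    · rintro ⟨⟨h1, h2⟩, h3⟩
      exact ⟨h2, h3⟩
    · rintro ⟨h2, h3⟩
      exact ⟨⟨h3 ▸ hb, h2⟩, h3⟩
  · intro k l hkl
    refine Set.disjoint_left.2 ?_
    rintro ξ ⟨h1, h2⟩ ⟨h3, h4⟩
    rcases lt_or_gt_of_ne hkl with h | h
    · exact hb (h2 ▸ h3 k h)
    · exact hb (h4 ▸ h1 l h)
  · exact fun k => (dep_hEv A a b k).meas

theorem step_eq {Ω : Type*} [AddCommGroup Ω] [Countable Ω] [MeasurableSpace Ω]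
    [MeasurableSingletonClass Ω] (W : RandomWalk Ω) (A B : Set Ω)
    (hAB : Disjoint A B) (a a' : Ω) (j : ℕ) :
    W.μ (gEv (A ∪ B) a a' j) = W.μ (gEv A a a' j) +
      ∑' b : B, ∑' k : ℕ, ∑' m : ℕ, if j = k + m then
        W.μ (hEv A a b k) * W.μ (gEv (A ∪ B) b a' m) else 0 := by
  have hsub : gEv A a a' j ⊆ gEv (A ∪ B) a a' j :=
    fun ξ h => ⟨h.1, fun i hi => Or.inl (h.2 i hi)⟩
  let F : B × ℕ × ℕ → Set (ℕ → Ω) := fun p =>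
    if j = p.2.1 + p.2.2 then {ξ | ξ ∈ hEv A a p.1 p.2.1 ∧
      (fun i => ξ (p.2.1 + i)) ∈ gEv (A ∪ B) p.1 a' p.2.2} else ∅
  have hF : ∀ p ξ, ξ ∈ F p ↔ j = p.2.1 + p.2.2 ∧ ξ ∈ hEv A a p.1 p.2.1 ∧
      ξ ∈ gEv (A ∪ B) a a' j := by
    rintro ⟨b, k, m⟩ ξ
    simp only [F]
    split_ifs with h
    · subst h
      simp only [Set.mem_ofPred_eq, true_and]
      refine and_congr_right fun h1 => ?_
      obtain ⟨h1, h2⟩ := h1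
      simp only [gEv, Set.mem_ofPred_eq, ← h2, walk_shift]
      refine and_congr_right fun h3 => ⟨fun h4 i hi => ?_, fun h4 i hi => h4 _ (by omega)⟩
      rcases Nat.lt_or_ge i k with h5 | h5
      · exact Or.inl (h1 i h5)
      · have := h4 (i - k) (by omega)
        rwa [Nat.add_sub_cancel' h5] at this
    · simp [h]
  have hU : gEv (A ∪ B) a a' j \ gEv A a a' j = ⋃ p, F p := by
    ext ξ
    simp only [Set.mem_iUnion, hF, Set.mem_sdiff]
    constructor
    · rintro ⟨h1, h2⟩
      have h3 : ∃ i, i ≤ j ∧ walk a ξ i ∉ A := by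
        by_contra hc
        push Not at hc
        exact h2 ⟨h1.1, hc⟩
      classical
      have h4 := Nat.find_spec h3
      have h5 : walk a ξ (Nat.find h3) ∈ B := (h1.2 _ h4.1).resolve_left h4.2
      refine ⟨(⟨_, h5⟩, Nat.find h3, j - Nat.find h3), by simp only; omega, ⟨?_, rfl⟩, h1⟩
      intro i hi
      have := Nat.find_min h3 hi
      by_contra hc
      exact this ⟨by simp only at hi; omega, hc⟩
    · rintro ⟨⟨b, k, m⟩, h1, h2, h3⟩
      refine ⟨h3, fun h4 => ?_⟩
      have h5 := h4.2 k (by simp only at h1; omega)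
      have h6 : walk a ξ k = b := h2.2
      exact Set.disjoint_left.1 hAB h5 (h6 ▸ b.2)
  have hm : ∀ p, MeasurableSet (F p) := by
    intro p
    refine Dep.meas (k := max p.2.1 j) ?_
    intro ξ ξ' h h1
    rw [hF] at h1 ⊢
    exact ⟨h1.1, dep_hEv _ _ _ _ ξ ξ' (fun i hi => h i (by omega)) h1.2.1,
      dep_gEv _ _ _ _ ξ ξ' (fun i hi => h i (by omega)) h1.2.2⟩
  rw [← measure_sdiff_add_inter (μ := W.μ) (gEv (A ∪ B) a a' j) (dep_gEv A a a' j).meas,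
    Set.inter_eq_self_of_subset_right hsub, hU, add_comm, measure_iUnion _ hm,
    ENNReal.tsum_prod']
  · congr 1
    refine tsum_congr fun b => ?_
    rw [ENNReal.tsum_prod']
    refine tsum_congr fun k => tsum_congr fun m => ?_
    simp only [F]
    split_ifs
    · exact markov W (dep_hEv _ _ _ _) (dep_gEv _ _ _ _)
    · simp
  · rintro ⟨b, k, m⟩ ⟨b', k', m'⟩ hne
    refine Set.disjoint_left.2 fun ξ h1 h2 => hne ?_
    rw [hF] at h1 h2
    obtain ⟨e1, ⟨p1, q1⟩, -⟩ := h1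
    obtain ⟨e2, ⟨p2, q2⟩, -⟩ := h2
    simp only at e1 e2 p1 q1 p2 q2
    have hk : k = k' := by
      rcases lt_trichotomy k k' with h | h | h
      · exact (Set.disjoint_left.1 hAB (p2 k h) (q1 ▸ b.2)).elim
      · exact h
      · exact (Set.disjoint_left.1 hAB (p1 k' h) (q2 ▸ b'.2)).elim
    subst hk
    have hmm : m = m' := by omega
    subst hmm
    have hb : b = b' := Subtype.ext (q1.symm.trans q2)
    subst hb
    rfl

/-- Decomposition of the Green's function of `A ∪ B` over the first visit to `B`
before `C`: `G_{A∪B}(a,a') = G_A(a,a') + ∑_{b ∈ B} H_{B∪C}(a,b) G_{A∪B}(b,a')`. -/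
theorem green_union_decomposition
    {Ω : Type*} [AddCommGroup Ω] [Countable Ω] [MeasurableSpace Ω]
    [MeasurableSingletonClass Ω] (W : RandomWalk Ω) (A B C : Set Ω)
    (hcover : A ∪ B ∪ C = Set.univ) (hAB : Disjoint A B) (hAC : Disjoint A C)
    (hBC : Disjoint B C) (a a' : Ω) (ha : a ∈ A) (ha' : a' ∈ A) :
    W.G (A ∪ B) a a' =
      W.G A a a' + ∑' b : B, W.H (B ∪ C) a b * W.G (A ∪ B) b a' := by
  have hc : B ∪ C = Aᶜ := by
    ext x
    have h1 : x ∈ A ∪ B ∪ C := hcover ▸ Set.mem_univ x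
    have h2 := fun h : x ∈ A => Set.disjoint_left.1 hAB h
    have h3 := fun h : x ∈ A => Set.disjoint_left.1 hAC h
    simp only [Set.mem_union, Set.mem_compl_iff] at *
    tauto
  rw [hc, G_eq, G_eq]
  simp_rw [step_eq W A B hAB a a']
  rw [ENNReal.tsum_add, ENNReal.tsum_comm]
  congr 1
  refine tsum_congr fun b => ?_
  rw [H_eq W A a b (Set.disjoint_right.1 hAB b.2), G_eq, ENNReal.tsum_comm,
    ← ENNReal.tsum_mul_right]
  refine tsum_congr fun k => ?_
  rw [ENNReal.tsum_comm, ← ENNReal.tsum_mul_left]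
  refine tsum_congr fun m => ?_
  rw [tsum_ite_eq]
end

section
/- For every a' ∈ A with ρ_{a'} < 1, the Green's function of A ∪ B satisfies G_{A∪B}(a',a') ≤ G_A(a',a') / (1 − ρ_{a'}), where ρ_{a'} = P^{a'}(T_B < T_C and the walk returns from B to A before hitting C). -/
open MeasureTheory ENNReal

variable {Ω : Type*} [AddCommGroup Ω] [MeasurableSpace Ω]

theorem lt_hitTime_iff {Ω : Type*} (D : Set Ω) (s : ℕ → Ω) (k : ℕ) :
    (k : ℕ∞) < hitTime D s ↔ ∀ i ≤ k, s i ∉ D := by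
  constructor
  · intro h i hi hD
    have h1 : hitTime D s ≤ (i : ℕ∞) := iInf₂_le i hD
    have h2 : (k : ℕ∞) < (i : ℕ∞) := lt_of_lt_of_le h h1
    have h3 : k < i := by exact_mod_cast h2
    omega
  · intro h
    have h1 : ((k + 1 : ℕ) : ℕ∞) ≤ hitTime D s := by
      refine le_iInf₂ fun i hi => ?_
      have : k + 1 ≤ i := by
        by_contra hc
        exact h i (by omega) hi
      exact_mod_cast this
    refine lt_of_lt_of_le ?_ h1
    exact_mod_cast Nat.lt_succ_self k

theorem hitTime_le_iff {Ω : Type*} (D : Set Ω) (s : ℕ → Ω) (k : ℕ) :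
    hitTime D s ≤ (k : ℕ∞) ↔ ∃ i ≤ k, s i ∈ D := by
  rw [← not_lt, lt_hitTime_iff]
  push Not
  rfl

theorem hitTime_eq_iff {Ω : Type*} (D : Set Ω) (s : ℕ → Ω) (k : ℕ) :
    hitTime D s = (k : ℕ∞) ↔ s k ∈ D ∧ ∀ i < k, s i ∉ D := by
  constructor
  · intro h
    obtain ⟨i, hi, hD⟩ := (hitTime_le_iff D s k).1 h.le
    have h2 : ∀ i < k, s i ∉ D := by
      intro j hj hjD
      have h1 := (hitTime_le_iff D s j).2 ⟨j, le_rfl, hjD⟩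
      rw [h] at h1
      have h3 : k ≤ j := by exact_mod_cast h1
      omega
    refine ⟨?_, h2⟩
    rcases hi.lt_or_eq with h' | h'
    · exact absurd hD (h2 i h')
    · exact h' ▸ hD
  · rintro ⟨h1, h2⟩
    refine le_antisymm ((hitTime_le_iff D s k).2 ⟨k, le_rfl, h1⟩) ?_
    refine le_iInf₂ fun i hi => ?_
    have : k ≤ i := by
      by_contra hc
      exact h2 i (by omega) hi
    exact_mod_cast this

/-- Cylinder sets. -/
def cyl {Ω : Type*} (n : ℕ) (f : Fin n → Ω) : Set (ℕ → Ω) := {ξ | ∀ i : Fin n, ξ (i : ℕ) = f i}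

theorem measurableSet_cyl {Ω : Type*} [MeasurableSpace Ω] [MeasurableSingletonClass Ω]
    (n : ℕ) (f : Fin n → Ω) : MeasurableSet (cyl n f) := by
  have : cyl n f = ⋂ i : Fin n, (fun ξ : ℕ → Ω => ξ (i : ℕ)) ⁻¹' {f i} := by
    ext ξ; simp [cyl]
  rw [this]
  exact MeasurableSet.iInter fun i => measurable_pi_apply _ (measurableSet_singleton _)

theorem cyl_generate {Ω : Type*} [Countable Ω] [MeasurableSpace Ω] [MeasurableSingletonClass Ω] :
    (MeasurableSpace.pi : MeasurableSpace (ℕ → Ω)) =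
      MeasurableSpace.generateFrom {t | ∃ n f, t = cyl (Ω := Ω) n f} := by
  apply le_antisymm
  · refine iSup_le fun i => ?_
    rintro _ ⟨S, -, rfl⟩
    have : (fun ξ : ℕ → Ω => ξ i) ⁻¹' S =
        ⋃ f : {f : Fin (i + 1) → Ω // f (Fin.last i) ∈ S}, cyl (i + 1) f.1 := by
      ext ξ
      simp only [Set.mem_preimage, Set.mem_iUnion, cyl, Set.mem_ofPred_eq]
      constructor
      · intro h
        exact ⟨⟨fun j => ξ j, by simpa using h⟩, fun _ => rfl⟩
      · rintro ⟨⟨f, hf⟩, h⟩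
        have := h (Fin.last i)
        simp only [Fin.val_last] at this
        rw [this]; exact hf
    rw [this]
    exact @MeasurableSet.iUnion _ _ (MeasurableSpace.generateFrom _) _ _
      fun f => MeasurableSpace.measurableSet_generateFrom ⟨_, _, rfl⟩
  · refine MeasurableSpace.generateFrom_le ?_
    rintro _ ⟨n, f, rfl⟩
    exact measurableSet_cyl n f

theorem cyl_piSystem {Ω : Type*} : IsPiSystem {t | ∃ n f, t = cyl (Ω := Ω) n f} := by
  rintro _ ⟨n, f, rfl⟩ _ ⟨m, g, rfl⟩ ⟨ξ, h1, h2⟩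
  refine ⟨max n m, fun i => ξ i, ?_⟩
  ext η
  simp only [cyl, Set.mem_inter_iff, Set.mem_ofPred_eq] at *
  constructor
  · rintro ⟨h3, h4⟩ ⟨i, hi⟩
    rcases lt_max_iff.1 hi with h | h
    · exact (h3 ⟨i, h⟩).trans (h1 ⟨i, h⟩).symm
    · exact (h4 ⟨i, h⟩).trans (h2 ⟨i, h⟩).symm
  · intro h
    exact ⟨fun i => (h ⟨i, lt_max_of_lt_left i.2⟩).trans (h1 i),
      fun i => (h ⟨i, lt_max_of_lt_right i.2⟩).trans (h2 i)⟩

theorem cyl_markov {Ω : Type*} [AddCommGroup Ω] [Countable Ω] [MeasurableSpace Ω]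
    [MeasurableSingletonClass Ω] (W : RandomWalk Ω) (n : ℕ) (c : Fin n → Ω)
    (E : Set (ℕ → Ω)) (hE : MeasurableSet E) :
    W.μ (cyl n c ∩ {ξ | (fun i => ξ (n + i)) ∈ E}) = W.μ (cyl n c) * W.μ E := by
  have := W.probμ
  have hsh : Measurable (fun (ξ : ℕ → Ω) (i : ℕ) => ξ (n + i)) :=
    measurable_pi_lambda _ fun i => measurable_pi_apply _
  have key : (W.μ.restrict (cyl n c)).map (fun (ξ : ℕ → Ω) (i : ℕ) => ξ (n + i)) =
      W.μ (cyl n c) • W.μ := by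
    refine ext_of_generate_finite _ cyl_generate cyl_piSystem ?_ ?_
    · rintro _ ⟨m, f, rfl⟩
      rw [Measure.map_apply hsh (measurableSet_cyl m f),
        Measure.restrict_apply (hsh (measurableSet_cyl m f))]
      have : (fun (ξ : ℕ → Ω) (i : ℕ) => ξ (n + i)) ⁻¹' cyl m f ∩ cyl n c =
          {ξ | ∀ i : Fin (n + m), ξ (i : ℕ) = Fin.append c f i} := by
        ext ξ
        simp only [cyl, Set.mem_inter_iff, Set.mem_preimage, Set.mem_ofPred_eq]
        rw [Fin.forall_fin_add]
        simp [and_comm]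
      rw [this, W.iid]
      simp only [Measure.smul_apply, smul_eq_mul]
      unfold cyl
      rw [W.iid, W.iid, Fin.prod_univ_add]
      simp
    · rw [Measure.map_apply hsh MeasurableSet.univ]
      simp
  have h2 := congrArg (fun m => m E) key
  simp only [Measure.smul_apply, smul_eq_mul] at h2
  rw [Measure.map_apply hsh hE, Measure.restrict_apply (hsh hE)] at h2
  rw [← h2, Set.inter_comm]
  rfl

theorem measurable_walk {Ω : Type*} [AddCommGroup Ω] [Countable Ω] [MeasurableSpace Ω]
    [MeasurableSingletonClass Ω] (x : Ω) : Measurable (walk x) := by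
  refine measurable_pi_lambda _ fun n => ?_
  unfold walk
  refine (measurable_of_countable (fun z : Ω => x + z)).comp ?_
  exact Finset.measurable_fun_sum _ fun i _ => measurable_pi_apply i

theorem walk_add {Ω : Type*} [AddCommGroup Ω] (x : Ω) (ξ : ℕ → Ω) (n i : ℕ) :
    walk x ξ (n + i) = walk (walk x ξ n) (fun j => ξ (n + j)) i := by
  unfold walk
  rw [Finset.sum_range_add, add_assoc]

theorem markov_s4 {Ω : Type*} [AddCommGroup Ω] [Countable Ω] [MeasurableSpace Ω]
    [MeasurableSingletonClass Ω] (W : RandomWalk Ω) (n : ℕ) (x y : Ω)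
    (F θ : Set (ℕ → Ω)) (hF : MeasurableSet F) (hθ : MeasurableSet θ)
    (hdep : ∀ s s' : ℕ → Ω, (∀ i ≤ n, s i = s' i) → s ∈ F → s' ∈ F)
    (hy : ∀ s ∈ F, s n = y) :
    W.P x {s | s ∈ F ∧ (fun i => s (n + i)) ∈ θ} ≤ W.P x F * W.P y θ := by
  unfold RandomWalk.P
  have hFm : MeasurableSet {ξ | walk x ξ ∈ F} := measurable_walk x hF
  have hθm : MeasurableSet {ξ | walk y ξ ∈ θ} := measurable_walk y hθ
  have hsum : W.μ {ξ | walk x ξ ∈ F} = ∑' c : Fin n → Ω, W.μ ({ξ | walk x ξ ∈ F} ∩ cyl n c) := by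
    rw [← measure_iUnion]
    · congr 1
      ext ξ
      simp only [Set.mem_iUnion, Set.mem_inter_iff, cyl, Set.mem_ofPred_eq]
      exact ⟨fun h => ⟨fun i => ξ i, h, fun _ => rfl⟩, fun ⟨_, h, _⟩ => h⟩
    · intro c d hcd
      refine Set.disjoint_left.2 fun ξ h1 h2 => hcd ?_
      funext i
      exact (h1.2 i).symm.trans (h2.2 i)
    · exact fun c => hFm.inter (measurableSet_cyl n c)
  rw [hsum, ← ENNReal.tsum_mul_right]
  refine (measure_mono (t := ⋃ c : Fin n → Ω, {ξ | walk x ξ ∈ F} ∩ cyl n c ∩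
    {ξ | (fun i => ξ (n + i)) ∈ {ξ | walk y ξ ∈ θ}}) ?_).trans
    ((measure_iUnion_le _).trans (ENNReal.tsum_le_tsum fun c => ?_))
  · rintro ξ ⟨h1, h2⟩
    simp only [Set.mem_iUnion]
    refine ⟨fun i => ξ i, ⟨h1, fun _ => rfl⟩, ?_⟩
    simp only [walk_add, hy _ h1] at h2
    exact h2
  · by_cases hne : ∃ ξ, walk x ξ ∈ F ∧ ξ ∈ cyl n c
    · obtain ⟨ξ, h1, h2⟩ := hne
      have : {ξ | walk x ξ ∈ F} ∩ cyl n c = cyl n c := by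
        refine Set.inter_eq_right.2 fun η hη => ?_
        refine hdep _ _ (fun i hi => ?_) h1
        unfold walk
        congr 1
        refine Finset.sum_congr rfl fun j hj => ?_
        have hj' : j < n := by have := Finset.mem_range.1 hj; omega
        exact (h2 ⟨j, hj'⟩).trans (hη ⟨j, hj'⟩).symm
      rw [this, cyl_markov W n c _ hθm]
    · have : {ξ | walk x ξ ∈ F} ∩ cyl n c = ∅ := by
        ext ξ
        simp only [Set.mem_inter_iff, Set.mem_empty_iff_false, iff_false]
        exact fun h => hne ⟨ξ, h.1, h.2⟩
      rw [this]; simp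

theorem conv_bound (g p : ℕ → ℝ≥0∞) (N : ℕ) :
    ∑ j ∈ Finset.range N, ∑ t ∈ Finset.range (j + 1), g t * p (j - t) ≤
      (∑' t, g t) * ∑ j ∈ Finset.range N, p j := by
  rw [Finset.sum_comm' (t' := Finset.range N) (s' := fun t => Finset.Ico t N)]
  · refine le_trans ?_ (mul_le_mul_left (ENNReal.sum_le_tsum (Finset.range N)) _)
    rw [Finset.sum_mul]
    refine Finset.sum_le_sum fun t _ => ?_
    rw [← Finset.mul_sum, Finset.sum_Ico_eq_sum_range]
    gcongr
    simp only [Nat.add_sub_cancel_left]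
    exact Finset.sum_le_sum_of_subset (Finset.range_mono (by omega))
  · intro a b
    simp only [Finset.mem_range, Finset.mem_Ico]
    omega

theorem P_mono {Ω : Type*} [AddCommGroup Ω] [MeasurableSpace Ω] (W : RandomWalk Ω) (x : Ω)
    {F G : Set (ℕ → Ω)} (h : F ⊆ G) : W.P x F ≤ W.P x G :=
  measure_mono fun _ hξ => h hξ

theorem P_iUnion_le {Ω : Type*} [AddCommGroup Ω] [MeasurableSpace Ω] (W : RandomWalk Ω) (x : Ω)
    {ι : Type*} [Countable ι] (F : ι → Set (ℕ → Ω)) :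
    W.P x (⋃ i, F i) ≤ ∑' i, W.P x (F i) := by
  unfold RandomWalk.P
  refine le_trans (measure_mono ?_) (measure_iUnion_le _)
  intro ξ hξ
  simpa using hξ

theorem P_tsum {Ω : Type*} [AddCommGroup Ω] [Countable Ω] [MeasurableSpace Ω]
    [MeasurableSingletonClass Ω] (W : RandomWalk Ω) (x : Ω)
    {ι : Type*} [Countable ι] (F : ι → Set (ℕ → Ω)) (hF : ∀ i, MeasurableSet (F i))
    (hd : ∀ i j s, s ∈ F i → s ∈ F j → i = j) :
    ∑' i, W.P x (F i) = W.P x (⋃ i, F i) := by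
  unfold RandomWalk.P
  rw [← measure_iUnion]
  · congr 1
    ext ξ; simp
  · intro i j hij
    exact Set.disjoint_left.2 fun ξ h1 h2 => hij (hd i j _ h1 h2)
  · exact fun i => measurable_walk x (hF i)

theorem meas_coord {Ω : Type*} [Countable Ω] [MeasurableSpace Ω]
    [MeasurableSingletonClass Ω] (i : ℕ) (D : Set Ω) : MeasurableSet {s : ℕ → Ω | s i ∈ D} :=
  measurable_pi_apply i (Set.to_countable D).measurableSet


theorem meas_forall {Ω : Type*} [Countable Ω] [MeasurableSpace Ω]
    [MeasurableSingletonClass Ω] (p : ℕ → Prop) (D : Set Ω) :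
    MeasurableSet {s : ℕ → Ω | ∀ i, p i → s i ∈ D} := by
  simp only [Set.ofPred_forall]
  exact MeasurableSet.iInter fun i => MeasurableSet.iInter fun _ => meas_coord i D

theorem meas_exists {Ω : Type*} [MeasurableSpace Ω]
    (p : ℕ → (ℕ → Ω) → Prop) (h : ∀ k, MeasurableSet {s | p k s}) :
    MeasurableSet {s : ℕ → Ω | ∃ k, p k s} := by
  simp only [Set.ofPred_exists]
  exact MeasurableSet.iUnion h

/-- For `a' ∈ A` with `ρ_{a'} < 1`, `G_{A∪B}(a',a') ≤ G_A(a',a') / (1 - ρ_{a'})`,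
where `ρ_{a'} = ∑_{b' ∈ B} H_{B∪C}(a',b') σ_{b'}` is the probability, starting from
`a'`, of hitting `B` and then returning to `A`, all before hitting `C`. -/
theorem green_union_diagonal_bound
    {Ω : Type*} [AddCommGroup Ω] [Countable Ω] [MeasurableSpace Ω]
    [MeasurableSingletonClass Ω] (W : RandomWalk Ω) (A B C : Set Ω)
    (hcover : A ∪ B ∪ C = Set.univ) (hAB : Disjoint A B) (hAC : Disjoint A C)
    (hBC : Disjoint B C) (a' : Ω) (ha' : a' ∈ A)
    (ρ : ℝ≥0∞)
    (hρdef : ρ = ∑' b' : B,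
      W.H (B ∪ C) a' b' * W.P b' {s | hitTime A s < hitTime C s})
    (hρ : ρ < 1) :
    W.G (A ∪ B) a' a' ≤ W.G A a' a' / (1 - ρ) := by
  classical
  have hcov : ∀ z, z ∈ A ∨ z ∈ B ∨ z ∈ C := by
    intro z
    have : z ∈ A ∪ B ∪ C := hcover ▸ Set.mem_univ z
    rcases this with (h | h) | h <;> simp [h]
  have dAB : ∀ z, z ∈ A → z ∉ B := fun z h1 h2 => Set.disjoint_left.1 hAB h1 h2
  have dAC : ∀ z, z ∈ A → z ∉ C := fun z h1 h2 => Set.disjoint_left.1 hAC h1 h2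
  have dBC : ∀ z, z ∈ B → z ∉ C := fun z h1 h2 => Set.disjoint_left.1 hBC h1 h2
  let Ev : Set Ω → ℕ → Set (ℕ → Ω) := fun D j => {s | s j ∈ ({a'} : Set Ω) ∧ ∀ i ≤ j, s i ∈ D}
  have hEv : ∀ D j, MeasurableSet (Ev D j) := fun D j =>
    (meas_coord j _).inter (meas_forall (fun i => i ≤ j) D)
  have hG : ∀ D, W.G D a' a' = ∑' j, W.P a' (Ev D j) := by
    intro D
    unfold RandomWalk.G
    refine tsum_congr fun j => ?_
    congr 1
    ext s
    refine and_congr Iff.rfl ((lt_hitTime_iff _ _ _).trans ?_)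
    simp only [Set.mem_compl_iff, not_not]
  let R : ℕ → Set (ℕ → Ω) := fun t => {s | s ∈ Ev (A ∪ B) t ∧ ∃ k, (k < t ∧ s k ∈ B ∧
    (∀ i < k, s i ∈ A)) ∧ ∀ i, k ≤ i ∧ i < t → s i ∈ ({a'}ᶜ : Set Ω)}
  have hR : ∀ t, MeasurableSet (R t) := by
    intro t
    exact (hEv _ t).inter (meas_exists _ fun k =>
      (((MeasurableSet.const (k < t)).inter ((meas_coord k B).inter
        (meas_forall (fun i => i < k) A))).inter
        (meas_forall (fun i => k ≤ i ∧ i < t) ({a'}ᶜ : Set Ω))))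
  have hRd : ∀ t t' s, s ∈ R t → s ∈ R t' → t = t' := by
    have aux : ∀ t t' s, s ∈ R t → s ∈ R t' → ¬ t < t' := by
      rintro t t' s ⟨h1, k, ⟨hk, hkB, hkA⟩, h2⟩ ⟨h1', k', ⟨hk', hkB', hkA'⟩, h2'⟩ hlt
      have hkk : k' ≤ k := by
        by_contra hc
        exact dAB _ (hkA' k (by omega)) hkB
      exact h2' t ⟨by omega, hlt⟩ h1.1
    intro t t' s h h'
    have := aux t t' s h h'
    have := aux t' t s h' h
    omega
  let θ : Set (ℕ → Ω) := {s | ∃ m, s m ∈ A ∧ ∀ i ≤ m, s i ∈ Cᶜ}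
  have hθ : MeasurableSet θ := by
    exact meas_exists _ fun m => (meas_coord m A).inter (meas_forall (fun i => i ≤ m) Cᶜ)
  have hθsub : θ ⊆ {s | hitTime A s < hitTime C s} := by
    rintro s ⟨m, hm, hC⟩
    exact lt_of_le_of_lt ((hitTime_le_iff A s m).2 ⟨m, le_rfl, hm⟩)
      ((lt_hitTime_iff C s m).2 hC)
  let F : Ω → ℕ → Set (ℕ → Ω) := fun b k => {s | s k ∈ ({b} : Set Ω) ∧ ∀ i < k, s i ∈ A}
  have hF : ∀ b k, MeasurableSet (F b k) := fun b k =>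
    (meas_coord k _).inter (meas_forall (fun i => i < k) A)
  have hH : ∀ b : B, ∑' k, W.P a' (F b k) ≤ W.H (B ∪ C) a' b := by
    intro b
    rw [P_tsum W a' _ (hF b)]
    · unfold RandomWalk.H
      refine P_mono W a' ?_
      intro s hs
      obtain ⟨k, h1, h2⟩ := Set.mem_iUnion.1 hs
      have h1' : s k = b := h1
      refine ⟨k, (hitTime_eq_iff _ _ _).2 ⟨?_, ?_⟩, h1'⟩
      · rw [h1']; exact Or.inl b.2
      · intro i hi h
        rcases h with h | h
        · exact dAB _ (h2 i hi) h
        · exact dAC _ (h2 i hi) h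
    · have aux : ∀ i j s, s ∈ F b i → s ∈ F b j → ¬ i < j := by
        rintro i j s ⟨h1, h2⟩ ⟨h3, h4⟩ hij
        have h1' : s i = b := h1
        have := dAB _ (h4 i hij)
        rw [h1'] at this
        exact this b.2
      intro i j s h1 h2
      have := aux i j s h1 h2
      have := aux j i s h2 h1
      omega
  have hg : ∑' t, W.P a' (R t) ≤ ρ := by
    rw [P_tsum W a' R hR hRd, hρdef]
    have hsub : (⋃ t, R t) ⊆ ⋃ b : B, ⋃ k : ℕ,
        {s | s ∈ F b k ∧ (fun i => s (k + i)) ∈ θ} := by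
      intro s hs
      obtain ⟨t, ⟨h0, h1⟩, k, ⟨hk, hkB, hkA⟩, h2⟩ := Set.mem_iUnion.1 hs
      simp only [Set.mem_iUnion]
      have h0' : s t = a' := h0
      refine ⟨⟨s k, hkB⟩, k, ⟨rfl, hkA⟩, t - k, ?_, ?_⟩
      · have : k + (t - k) = t := by omega
        simp only [this, h0']
        exact ha'
      · intro i hi hc
        rcases h1 (k + i) (by omega) with h | h
        · exact dAC _ h hc
        · exact dBC _ h hc
    refine (P_mono W a' hsub).trans ((P_iUnion_le W a' _).trans
      (ENNReal.tsum_le_tsum fun b => ?_))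
    refine (P_iUnion_le W a' _).trans ?_
    refine le_trans (ENNReal.tsum_le_tsum fun k =>
      markov_s4 W k a' b (F b k) θ (hF b k) hθ ?_ ?_) ?_
    · rintro s s' hss ⟨h1, h2⟩
      refine ⟨?_, fun i hi => ?_⟩
      · rw [← hss k le_rfl]; exact h1
      · rw [← hss i hi.le]; exact h2 i hi
    · exact fun s hs => hs.1
    · rw [ENNReal.tsum_mul_right]
      exact mul_le_mul' (hH b) (P_mono W b hθsub)
  have hdec : ∀ j, W.P a' (Ev (A ∪ B) j) ≤ W.P a' (Ev A j) +
      ∑ t ∈ Finset.range (j + 1), W.P a' (R t) * W.P a' (Ev (A ∪ B) (j - t)) := by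
    intro j
    have hsub : ∀ s ∈ Ev (A ∪ B) j, s ∈ Ev A j ∨ ∃ t ∈ Finset.range (j + 1),
        s ∈ R t ∧ (fun i => s (t + i)) ∈ Ev (A ∪ B) (j - t) := by
      rintro s ⟨h1, h2⟩
      by_cases hA : ∀ i ≤ j, s i ∈ A
      · exact Or.inl ⟨h1, hA⟩
      right
      have hex : ∃ k, k ≤ j ∧ s k ∈ B := by
        push Not at hA
        obtain ⟨k, hk, hkA⟩ := hA
        exact ⟨k, hk, (h2 k hk).resolve_left hkA⟩
      have hk := Nat.find_spec hex
      have hkmin : ∀ i < Nat.find hex, s i ∈ A := by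
        intro i hi
        have := Nat.find_min hex hi
        have hij : i ≤ j := by omega
        exact (h2 i hij).resolve_right fun h => this ⟨hij, h⟩
      generalize Nat.find hex = k at hk hkmin
      have hex2 : ∃ t, k ≤ t ∧ s t = a' := ⟨j, hk.1, h1⟩
      have ht := Nat.find_spec hex2
      have htmin : ∀ i, k ≤ i ∧ i < Nat.find hex2 → s i ≠ a' :=
        fun i ⟨hi, hlt⟩ h => Nat.find_min hex2 hlt ⟨hi, h⟩
      have htj : Nat.find hex2 ≤ j := Nat.find_min' hex2 ⟨hk.1, h1⟩
      generalize Nat.find hex2 = t at ht htmin htj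
      have hkt : k < t := by
        rcases ht.1.lt_or_eq with h | h
        · exact h
        · exfalso
          have := ht.2
          rw [← h] at this
          exact dAB _ ha' (this ▸ hk.2)
      refine ⟨t, Finset.mem_range.2 (by omega),
        ⟨⟨ht.2, fun i hi => h2 i (by omega)⟩, k, ⟨hkt, hk.2, hkmin⟩, htmin⟩, ?_, ?_⟩
      · have : t + (j - t) = j := by omega
        simp only [this]
        exact h1
      · intro i hi
        exact h2 _ (by omega)
    have hstep : W.P a' (Ev (A ∪ B) j) ≤ W.P a' (Ev A j) + ∑ t ∈ Finset.range (j + 1),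
        W.P a' {s | s ∈ R t ∧ (fun i => s (t + i)) ∈ Ev (A ∪ B) (j - t)} := by
      unfold RandomWalk.P
      refine le_trans (measure_mono (t := {ξ | walk a' ξ ∈ Ev A j} ∪
        ⋃ t ∈ Finset.range (j + 1), {ξ | walk a' ξ ∈
          {s | s ∈ R t ∧ (fun i => s (t + i)) ∈ Ev (A ∪ B) (j - t)}}) ?_) ?_
      · intro ξ hξ
        rcases hsub _ hξ with h | ⟨t, ht, h⟩
        · exact Or.inl h
        · exact Or.inr (Set.mem_biUnion ht h)
      · exact (measure_union_le _ _).trans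
          (add_le_add le_rfl (measure_biUnion_finset_le _ _))
    refine hstep.trans (add_le_add le_rfl (Finset.sum_le_sum fun t _ => ?_))
    refine markov_s4 W t a' a' (R t) _ (hR t) (hEv _ _) ?_ ?_
    · rintro s s' hss ⟨⟨h0, h1⟩, k, ⟨hk, hkB, hkA⟩, h2⟩
      refine ⟨⟨?_, fun i hi => ?_⟩, k, ⟨hk, ?_, fun i hi => ?_⟩, fun i hi => ?_⟩
      · rw [← hss t le_rfl]; exact h0
      · rw [← hss i hi]; exact h1 i hi
      · rw [← hss k hk.le]; exact hkB
      · rw [← hss i (by omega)]; exact hkA i hi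
      · rw [← hss i hi.2.le]; exact h2 i hi
    · exact fun s hs => hs.1.1
  have hprob := W.probμ
  rw [hG (A ∪ B), ENNReal.tsum_eq_iSup_nat]
  refine iSup_le fun N => ?_
  have hfin : ∑ j ∈ Finset.range N, W.P a' (Ev (A ∪ B) j) ≠ ⊤ := by
    refine (ENNReal.sum_lt_top.2 fun j _ => ?_).ne
    exact measure_lt_top _ _
  have hV : ∑ j ∈ Finset.range N, W.P a' (Ev (A ∪ B) j) ≤ W.G A a' a' +
      ρ * ∑ j ∈ Finset.range N, W.P a' (Ev (A ∪ B) j) := by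
    refine (Finset.sum_le_sum fun j _ => hdec j).trans ?_
    rw [Finset.sum_add_distrib, hG A]
    refine add_le_add (ENNReal.sum_le_tsum _) ?_
    exact (conv_bound (fun t => W.P a' (R t)) (fun j => W.P a' (Ev (A ∪ B) j)) N).trans
      (mul_le_mul' hg le_rfl)
  generalize ∑ j ∈ Finset.range N, W.P a' (Ev (A ∪ B) j) = V at hfin hV
  rw [ENNReal.le_div_iff_mul_le (Or.inl (tsub_pos_of_lt hρ).ne')
    (Or.inl (ne_top_of_le_ne_top ENNReal.one_ne_top tsub_le_self)),
    ENNReal.mul_sub (fun _ _ => hfin), mul_one, mul_comm]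
  exact tsub_le_iff_right.2 hV
end

section
/- (Proposition 2, part (a)) Suppose f_A = sup_{a ∈ A} E^a(T_{B∪C}) and f_B = sup_{b ∈ B} E^b(T_{A∪C}) are finite, and ψ·σ < 1 where ψ = sup_{a ∈ A} ψ_a and σ = sup_{b ∈ B} σ_b. Then for every a ∈ A, E^a(T_{B∪C}) ≤ E^a(T_C) ≤ E^a(T_{B∪C}) + ψ_a · (f_B + σ f_A) / (1 − ψσ). -/
open MeasureTheory ENNReal

variable {Ω : Type*} [AddCommGroup Ω] [MeasurableSpace Ω]

section Helpers

theorem hit_zero {Ω : Type*} {D : Set Ω} {s : ℕ → Ω} (h : s 0 ∈ D) : hitTime D s = 0 := by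
  refine le_antisymm ?_ bot_le
  exact (iInf₂_le 0 h).trans (by simp)

theorem hit_succ {Ω : Type*} {D : Set Ω} {s : ℕ → Ω} (h : s 0 ∉ D) :
    hitTime D s = hitTime D (fun n => s (n + 1)) + 1 := by
  apply le_antisymm
  · unfold hitTime
    rw [ENat.iInf_add]
    refine le_iInf fun k => ?_
    by_cases hk : s (k + 1) ∈ D
    · simp only [hk, iInf_pos]
      exact (iInf₂_le (k + 1) hk).trans (by simp)
    · simp [hk]
  · refine le_iInf₂ fun k hk => ?_
    cases k with
    | zero => exact absurd hk h
    | succ k =>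
      have : hitTime D (fun n => s (n + 1)) ≤ (k : ℕ∞) := iInf₂_le (f := fun (k : ℕ) (_ : s (k+1) ∈ D) => (k : ℕ∞)) k hk
      push_cast
      gcongr

theorem hit_anti {Ω : Type*} {D D' : Set Ω} (h : D ⊆ D') (s : ℕ → Ω) :
    hitTime D' s ≤ hitTime D s :=
  le_iInf₂ fun k hk => iInf₂_le k (h hk)

def consSeq {Ω : Type*} (p : Ω × (ℕ → Ω)) : ℕ → Ω
  | 0 => p.1
  | n + 1 => p.2 n

theorem walk_zero {Ω : Type*} [AddCommGroup Ω] (x : Ω) (ξ : ℕ → Ω) : walk x ξ 0 = x := by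
  simp [walk]

theorem walk_cons {Ω : Type*} [AddCommGroup Ω] (x : Ω) (p : Ω × (ℕ → Ω)) :
    (fun n => walk x (consSeq p) (n + 1)) = walk (x + p.1) p.2 := by
  funext n
  simp only [walk, Finset.sum_range_succ', consSeq]
  abel

theorem measurable_consSeq {Ω : Type*} [MeasurableSpace Ω] :
    Measurable (consSeq : Ω × (ℕ → Ω) → ℕ → Ω) := by
  refine measurable_pi_lambda _ fun n => ?_
  cases n with
  | zero => exact measurable_fst
  | succ n => exact (measurable_pi_apply n).comp measurable_snd

theorem cyl_inter {Ω : Type*} {n m : ℕ} (h : n ≤ m) (f : Fin n → Ω) (g : Fin m → Ω)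
    (hne : (cyl n f ∩ cyl m g).Nonempty) : cyl n f ∩ cyl m g = cyl m g := by
  obtain ⟨ζ, h1, h2⟩ := hne
  refine Set.inter_eq_right.2 fun ξ hξ i => ?_
  have a := h1 i
  have b := h2 ⟨i, i.2.trans_le h⟩
  have c := hξ ⟨i, i.2.trans_le h⟩
  simp only at b c
  rw [c, ← b, a]

theorem gen_cyl {Ω : Type*} [Countable Ω] [MeasurableSpace Ω] [MeasurableSingletonClass Ω] :
    (MeasurableSpace.pi : MeasurableSpace (ℕ → Ω)) =
      MeasurableSpace.generateFrom {S | ∃ n, ∃ f : Fin n → Ω, S = cyl n f} := by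
  apply le_antisymm
  · refine iSup_le fun i => ?_
    rintro _ ⟨s, -, rfl⟩
    have : (fun ξ : ℕ → Ω => ξ i) ⁻¹' s =
        ⋃ (f : Fin (i + 1) → Ω) (_ : f (Fin.last i) ∈ s), cyl (i + 1) f := by
      ext ξ
      simp only [Set.mem_preimage, Set.mem_iUnion, exists_prop]
      constructor
      · intro h
        exact ⟨fun j => ξ j, by simpa using h, fun j => rfl⟩
      · rintro ⟨f, hf, h⟩
        have := h (Fin.last i)
        simp only [Fin.val_last] at this
        rwa [this]
    rw [this]
    refine MeasurableSet.iUnion fun f => MeasurableSet.iUnion fun _ => ?_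
    exact MeasurableSpace.measurableSet_generateFrom ⟨_, f, rfl⟩
  · refine MeasurableSpace.generateFrom_le ?_
    rintro _ ⟨n, f, rfl⟩
    exact measurableSet_cyl n f

theorem map_cons {Ω : Type*} [AddCommGroup Ω] [Countable Ω] [MeasurableSpace Ω]
    [MeasurableSingletonClass Ω] (W : RandomWalk Ω) :
    W.μ = (W.ν.prod W.μ).map consSeq := by
  have := W.probν
  have := W.probμ
  refine MeasureTheory.ext_of_generate_finite _ gen_cyl ?_ ?_ ?_
  · rintro _ ⟨n, f, rfl⟩ _ ⟨m, g, rfl⟩ hne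
    rcases le_total n m with h | h
    · exact ⟨m, g, cyl_inter h f g hne⟩
    · rw [Set.inter_comm] at hne ⊢
      exact ⟨n, f, cyl_inter h g f hne⟩
  · rintro _ ⟨n, f, rfl⟩
    rw [Measure.map_apply measurable_consSeq (measurableSet_cyl n f)]
    cases n with
    | zero => simp [cyl]
    | succ n =>
      have : consSeq ⁻¹' (cyl (n + 1) f) = {f 0} ×ˢ cyl n (fun i => f i.succ) := by
        ext p
        simp [cyl, Fin.forall_fin_succ, consSeq]
      rw [this, Measure.prod_prod]
      unfold cyl
      rw [W.iid, W.iid, Fin.prod_univ_succ]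
  · rw [Measure.map_apply measurable_consSeq MeasurableSet.univ]
    simp

theorem lint_cons {Ω : Type*} [AddCommGroup Ω] [Countable Ω] [MeasurableSpace Ω]
    [MeasurableSingletonClass Ω] (W : RandomWalk Ω) {F : (ℕ → Ω) → ℝ≥0∞} (hF : Measurable F) :
    ∫⁻ ξ, F ξ ∂W.μ = ∫⁻ y, ∫⁻ ξ, F (consSeq (y, ξ)) ∂W.μ ∂W.ν := by
  have := W.probν
  have := W.probμ
  conv_lhs => rw [map_cons W]
  rw [lintegral_map hF measurable_consSeq, lintegral_prod]
  exact (hF.comp measurable_consSeq).aemeasurable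

theorem meas_walk {Ω : Type*} [AddCommGroup Ω] [Countable Ω] [MeasurableSpace Ω]
    [MeasurableSingletonClass Ω] (x : Ω) (n : ℕ) : Measurable (fun ξ : ℕ → Ω => walk x ξ n) := by
  unfold walk
  fun_prop

theorem meas_hitE {Ω : Type*} [AddCommGroup Ω] [Countable Ω] [MeasurableSpace Ω]
    [MeasurableSingletonClass Ω] (x : Ω) (D : Set Ω) :
    Measurable (fun ξ : ℕ → Ω => (hitTime D (walk x ξ) : ℝ≥0∞)) := by
  unfold hitTime
  simp only [ENat.toENNReal_iInf]
  refine Measurable.iInf fun k => ?_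
  have : (fun ξ : ℕ → Ω => ⨅ (_ : walk x ξ k ∈ D), (((k : ℕ∞)) : ℝ≥0∞)) =
      (fun z : Ω => ⨅ (_ : z ∈ D), (((k : ℕ∞)) : ℝ≥0∞)) ∘ (fun ξ : ℕ → Ω => walk x ξ k) := rfl
  rw [this]
  exact (measurable_of_countable _).comp (meas_walk x k)

noncomputable def tt {Ω : Type*} [AddCommGroup Ω] [MeasurableSpace Ω] (W : RandomWalk Ω)
    (C : Set Ω) (n : ℕ) (x : Ω) : ℝ≥0∞ :=
  ∫⁻ ξ, min (hitTime C (walk x ξ) : ℝ≥0∞) n ∂W.μ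

theorem E_step {Ω : Type*} [AddCommGroup Ω] [Countable Ω] [MeasurableSpace Ω]
    [MeasurableSingletonClass Ω] (W : RandomWalk Ω) (D : Set Ω) (x : Ω) (hx : x ∉ D) :
    W.E x D = (∫⁻ y, W.E (x + y) D ∂W.ν) + 1 := by
  have := W.probν
  have := W.probμ
  unfold RandomWalk.E
  rw [lint_cons W (meas_hitE x D)]
  have : ∀ y ξ, hitTime D (walk x (consSeq (y, ξ))) = hitTime D (walk (x + y) ξ) + 1 := by
    intro y ξ
    rw [hit_succ (by rwa [walk_zero]), walk_cons]
  simp only [this, ENat.toENNReal_add, ENat.toENNReal_one]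
  simp [lintegral_add_right]

theorem tt_step {Ω : Type*} [AddCommGroup Ω] [Countable Ω] [MeasurableSpace Ω]
    [MeasurableSingletonClass Ω] (W : RandomWalk Ω) (D : Set Ω) (n : ℕ) (x : Ω) (hx : x ∉ D) :
    tt W D (n + 1) x = (∫⁻ y, tt W D n (x + y) ∂W.ν) + 1 := by
  have := W.probν
  have := W.probμ
  unfold tt
  rw [lint_cons W ((meas_hitE x D).min measurable_const)]
  have : ∀ y ξ, hitTime D (walk x (consSeq (y, ξ))) = hitTime D (walk (x + y) ξ) + 1 := by
    intro y ξ
    rw [hit_succ (by rwa [walk_zero]), walk_cons]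
  simp only [this, ENat.toENNReal_add, ENat.toENNReal_one, Nat.cast_add, Nat.cast_one,
    min_add_add_right]
  simp [lintegral_add_right]

theorem P_step {Ω : Type*} [AddCommGroup Ω] [Countable Ω] [MeasurableSpace Ω]
    [MeasurableSingletonClass Ω] (W : RandomWalk Ω) (B C : Set Ω) (x : Ω) (hB : x ∉ B)
    (hC : x ∉ C) :
    W.P x {s | hitTime B s < hitTime C s} =
      ∫⁻ y, W.P (x + y) {s | hitTime B s < hitTime C s} ∂W.ν := by
  have := W.probν
  have := W.probμ
  have hm : ∀ x, MeasurableSet {ξ : ℕ → Ω | hitTime B (walk x ξ) < hitTime C (walk x ξ)} := by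
    intro x
    simpa only [ENat.toENNReal_lt] using measurableSet_lt (meas_hitE x B) (meas_hitE x C)
  unfold RandomWalk.P
  simp only [Set.mem_ofPred_eq]
  conv_lhs => rw [map_cons W]
  rw [Measure.map_apply measurable_consSeq (hm x), Measure.prod_apply (measurable_consSeq (hm x))]
  refine lintegral_congr fun y => ?_
  congr 1
  ext ξ
  simp only [Set.mem_preimage, Set.mem_ofPred_eq]
  rw [hit_succ (D := B) (by rwa [walk_zero]), hit_succ (D := C) (by rwa [walk_zero]), walk_cons]
  exact ENat.add_lt_add_iff_right ENat.one_ne_top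

theorem tt_le {Ω : Type*} [AddCommGroup Ω] [Countable Ω] [MeasurableSpace Ω]
    [MeasurableSingletonClass Ω] (W : RandomWalk Ω) (B C : Set Ω) (hBC : Disjoint B C)
    (g : ℝ≥0∞) (n : ℕ) : ∀ (_ : ∀ k ≤ n, ∀ b ∈ B, tt W C k b ≤ g) (x : Ω),
    tt W C n x ≤ W.E x (B ∪ C) + W.P x {s | hitTime B s < hitTime C s} * g := by
  have := W.probν
  have := W.probμ
  induction n with
  | zero => intro _ x; simp [tt]
  | succ n ih =>
    intro hg x
    by_cases hC : x ∈ C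
    · have : tt W C (n + 1) x = 0 := by
        unfold tt
        have : ∀ ξ, hitTime C (walk x ξ) = 0 := fun ξ => hit_zero (by rwa [walk_zero])
        simp [this]
      rw [this]; exact bot_le
    by_cases hB : x ∈ B
    · have : W.P x {s | hitTime B s < hitTime C s} = 1 := by
        unfold RandomWalk.P
        have : {ξ : ℕ → Ω | walk x ξ ∈ {s | hitTime B s < hitTime C s}} = Set.univ := by
          refine Set.eq_univ_of_forall fun ξ => ?_
          simp only [Set.mem_ofPred_eq]
          rw [hit_zero (D := B) (by rwa [walk_zero]), hit_succ (D := C) (by rwa [walk_zero])]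
          simp
        rw [this, measure_univ]
      rw [this, one_mul]
      exact (hg _ le_rfl x hB).trans le_add_self
    · rw [tt_step W C n x hC, E_step W (B ∪ C) x (by simp [hB, hC]), P_step W B C x hB hC,
        ← lintegral_mul_const _ (measurable_of_countable _), add_right_comm,
        ← lintegral_add_left (measurable_of_countable _)]
      gcongr with y
      exact ih (fun k hk => hg k (hk.trans n.le_succ)) (x + y)

theorem tt_mono {Ω : Type*} [AddCommGroup Ω] [MeasurableSpace Ω]
    (W : RandomWalk Ω) (C : Set Ω) (x : Ω) {k n : ℕ} (h : k ≤ n) : tt W C k x ≤ tt W C n x := by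
  unfold tt
  gcongr

theorem tt_le_nat {Ω : Type*} [AddCommGroup Ω] [MeasurableSpace Ω]
    (W : RandomWalk Ω) (C : Set Ω) (x : Ω) (n : ℕ) : tt W C n x ≤ n := by
  have := W.probμ
  calc tt W C n x ≤ ∫⁻ _, (n : ℝ≥0∞) ∂W.μ := lintegral_mono fun ξ => min_le_right _ _
    _ = n := by simp

theorem E_eq_iSup {Ω : Type*} [AddCommGroup Ω] [Countable Ω] [MeasurableSpace Ω]
    [MeasurableSingletonClass Ω] (W : RandomWalk Ω) (C : Set Ω) (x : Ω) :
    W.E x C = ⨆ n, tt W C n x := by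
  unfold tt RandomWalk.E
  rw [← lintegral_iSup]
  · refine lintegral_congr fun ξ => ?_
    have h := inf_iSup_eq (hitTime C (walk x ξ) : ℝ≥0∞) (fun n : ℕ => (n : ℝ≥0∞))
    rw [ENNReal.iSup_natCast, inf_top_eq] at h
    exact h
  · exact fun n => (meas_hitE x C).min measurable_const
  · intro k n h ξ
    simp only
    gcongr

end Helpers

/-- Proposition 2, part (a): if `f_A, f_B` are finite and `ψσ < 1`, then for
every `a ∈ A`,
`E^a(T_{B∪C}) ≤ E^a(T_C) ≤ E^a(T_{B∪C}) + ψ_a (f_B + σ f_A)/(1 - ψσ)`. -/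
theorem prop2a
    {Ω : Type*} [AddCommGroup Ω] [Countable Ω] [MeasurableSpace Ω]
    [MeasurableSingletonClass Ω] (W : RandomWalk Ω) (A B C : Set Ω)
    (hcover : A ∪ B ∪ C = Set.univ) (hAB : Disjoint A B) (hAC : Disjoint A C)
    (hBC : Disjoint B C)
    (ψ' σ' : Ω → ℝ≥0∞)
    (hψdef : ∀ x, ψ' x = W.P x {s | hitTime B s < hitTime C s})
    (hσdef : ∀ x, σ' x = W.P x {s | hitTime A s < hitTime C s})
    (fA fB ψ σ : ℝ≥0∞)
    (hfAdef : fA = ⨆ a : A, W.E a (B ∪ C)) (hfA : fA ≠ ⊤)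
    (hfBdef : fB = ⨆ b : B, W.E b (A ∪ C)) (hfB : fB ≠ ⊤)
    (hψ : ψ = ⨆ a : A, ψ' a) (hσ : σ = ⨆ b : B, σ' b)
    (hψσ : ψ * σ < 1) :
    ∀ a ∈ A, W.E a (B ∪ C) ≤ W.E a C ∧
      W.E a C ≤ W.E a (B ∪ C) + ψ' a * (fB + σ * fA) / (1 - ψ * σ) := by
  intro a ha
  refine ⟨lintegral_mono fun ξ => ?_, ?_⟩
  · exact ENat.toENNReal_le.2 (hit_anti Set.subset_union_right _)
  rw [E_eq_iSup W C a]
  refine iSup_le fun n => ?_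
  set gA := ⨆ a : A, tt W C n a with hgA
  set gB := ⨆ b : B, tt W C n b with hgB
  have hgBfin : gB ≠ ⊤ :=
    ne_top_of_le_ne_top (ENNReal.natCast_ne_top n) (iSup_le fun b => tt_le_nat W C b n)
  have key1 : ∀ x, tt W C n x ≤ W.E x (B ∪ C) + ψ' x * gB := by
    intro x
    rw [hψdef]
    exact tt_le W B C hBC gB n (fun k hk b hb => (tt_mono W C b hk).trans
      (le_iSup (fun b : B => tt W C n b) ⟨b, hb⟩)) x
  have key2 : ∀ x, tt W C n x ≤ W.E x (A ∪ C) + σ' x * gA := by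
    intro x
    rw [hσdef]
    exact tt_le W A C hAC gA n (fun k hk b hb => (tt_mono W C b hk).trans
      (le_iSup (fun b : A => tt W C n b) ⟨b, hb⟩)) x
  have hA : gA ≤ fA + ψ * gB := by
    refine iSup_le fun x => (key1 x).trans ?_
    rw [hfAdef, hψ]
    gcongr
    · exact le_iSup (fun a : A => W.E a (B ∪ C)) x
    · exact le_iSup (fun a : A => ψ' a) x
  have hB : gB ≤ fB + σ * gA := by
    refine iSup_le fun x => (key2 x).trans ?_
    rw [hfBdef, hσ]
    gcongr
    · exact le_iSup (fun a : B => W.E a (A ∪ C)) x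
    · exact le_iSup (fun a : B => σ' a) x
  have h3 : gB ≤ (fB + σ * fA) + ψ * σ * gB := by
    calc gB ≤ fB + σ * (fA + ψ * gB) := hB.trans (by gcongr)
      _ = _ := by ring
  have h4 : gB ≤ (fB + σ * fA) / (1 - ψ * σ) := by
    rw [ENNReal.le_div_iff_mul_le (Or.inl (tsub_pos_of_lt hψσ).ne')
      (Or.inl (ne_top_of_le_ne_top ENNReal.one_ne_top tsub_le_self)),
      ENNReal.mul_sub (fun _ _ => hgBfin), mul_one, tsub_le_iff_right, mul_comm gB]
    exact h3
  refine (key1 a).trans ?_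
  rw [mul_div_assoc]
  gcongr
end
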